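/- With Γ^L and C^L as defined in the context, for every pair 0 ≤ s ≤ t ≤ T−1 the limit K(t,s) := lim_{k→∞} C^{2^k}_{t,s,1}(1) exists. (K(t,s) is the limiting covariance kernel ⟨x_s^L | x_t^L⟩ of the final-layer features of the linear residual network across SGD steps, i.e., the kernel of the zero-mean Gaussian process to which the final-layer features converge in the infinite-width-then-infinite-depth limit.) -/

import Mathlib

open MeasureTheory Set Finset Filter Topology

/-- The defining recursion (from the Tensor-Program analysis of a depth-`L` linear residual
network `x^l = x^{l−1} + L^{−1/2} W^l x^{l−1}` trained for `T` SGD steps under Depth-μP)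
for the coefficient functions `Γ^L_{t,r,a,b}(p,q)` and covariance functions `C^L_{t,s,a}(p)`,
together with the output values `f̊_t` and loss derivatives `χ̊_t = ℓ'_t(f̊_t)`.

Conventions: Booleans encode the indices `a, b ∈ {0,1}` (`false = 0`, `true = 1`); the
time index `r, s = −1` refers to the input/output layers `U, V`; `C_{−1,−1,·} ≡ 1`;
`C_{t,s,·} ≡ 0` if exactly one of `t, s` is `−1`; `C` is symmetric; `Γ_{s,r,·,·} ≡ 0` for
`r > s`; `Γ^L` is constant in `p` on each interval `((l−1)/L, l/L]`. -/
structure IsLinearTP (T L : ℕ) (ξ : ℕ → ℝ) (ℓ' : ℕ → ℝ → ℝ)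
    (Γ : ℕ → ℤ → Bool → Bool → ℝ → ℝ → ℝ)
    (C : ℤ → ℤ → Bool → ℝ → ℝ)
    (f χ : ℕ → ℝ) : Prop where
  C_symm : ∀ (t s : ℤ) (b : Bool) (p : ℝ), C t s b p = C s t b p
  C_base : ∀ (b : Bool) (p : ℝ), C (-1) (-1) b p = 1
  C_mixed : ∀ t : ℤ, 0 ≤ t → ∀ (b : Bool) (p : ℝ), C t (-1) b p = 0
  Γ_vanish : ∀ (t : ℕ) (r : ℤ), (t : ℤ) < r → ∀ (a b : Bool) (p q : ℝ), Γ t r a b p q = 0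
  Γ_const : ∀ t : ℕ, t < T → ∀ r : ℤ, -1 ≤ r → r ≤ (t : ℤ) → ∀ a b : Bool,
    ∀ l : ℕ, 1 ≤ l → l ≤ L → ∀ p q : ℝ, ((l : ℝ) - 1) / L < p → p ≤ (l : ℝ) / L →
      0 < q → q ≤ 1 → Γ t r a b p q = Γ t r a b ((l : ℝ) / L) q
  fwd_init : ∀ t : ℕ, t < T → ∀ r : ℤ, -1 ≤ r → r ≤ (t : ℤ) → ∀ b : Bool,
    ∀ q : ℝ, 0 < q → q ≤ 1 →
      Γ t r false b 0 q = if r = -1 ∧ b = false then ξ t else 0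
  fwd_step : ∀ t : ℕ, t < T → ∀ l : ℕ, 1 ≤ l → l ≤ L → ∀ r : ℤ, -1 ≤ r → r ≤ (t : ℤ) →
    ∀ b : Bool, ∀ p q : ℝ, ((l : ℝ) - 1) / L < p → p ≤ (l : ℝ) / L → 0 < q → q ≤ 1 →
      Γ t r false b p q =
        Γ t r false b (((l : ℝ) - 1) / L) q
          + (if (t : ℤ) = r ∧ b = false ∧ (l : ℤ) = ⌈(L : ℝ) * q⌉ then 1 else 0)
          + (1 / (L : ℝ)) * ∑ s ∈ Finset.range t,
              Γ s r true b ((l : ℝ) / L) q *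
                (Γ t (s : ℤ) false true (((l : ℝ) - 1) / L) ((l : ℝ) / L)
                  - C (t : ℤ) (s : ℤ) false ((l : ℝ) / L))
  fwd_C : ∀ t : ℕ, t < T → ∀ s : ℕ, s ≤ t → ∀ l : ℕ, 1 ≤ l → l ≤ L →
    ∀ p : ℝ, ((l : ℝ) - 1) / L < p → p ≤ (l : ℝ) / L →
      C (t : ℤ) (s : ℤ) false p =
        ∑ t' ∈ Finset.Icc (-1 : ℤ) (t : ℤ), ∑ s' ∈ Finset.Icc (-1 : ℤ) (s : ℤ), ∑ b : Bool,
          ∫ q in Ioc (0 : ℝ) 1,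
            Γ t t' false b (((l : ℝ) - 1) / L) q * C t' s' b q *
              Γ s s' false b (((l : ℝ) - 1) / L) q
  f_def : ∀ t : ℕ, t < T → f t = Γ t (-1) false true 1 1
  χ_def : ∀ t : ℕ, t < T → χ t = ℓ' t (f t)
  bwd_init : ∀ t : ℕ, t < T → ∀ r : ℤ, -1 ≤ r → r ≤ (t : ℤ) → ∀ b : Bool,
    ∀ q : ℝ, 0 < q → q ≤ 1 →
      Γ t r true b 1 q = if r = -1 ∧ b = true then χ t else 0
  bwd_step : ∀ t : ℕ, t < T → ∀ l : ℕ, 1 ≤ l → l ≤ L → ∀ r : ℤ, -1 ≤ r → r ≤ (t : ℤ) →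
    ∀ b : Bool, ∀ p q : ℝ, ((l : ℝ) - 2) / L < p → p ≤ ((l : ℝ) - 1) / L → 0 ≤ p →
      0 < q → q ≤ 1 →
      Γ t r true b p q =
        Γ t r true b ((l : ℝ) / L) q
          + (if (t : ℤ) = r ∧ b = true ∧ (l : ℤ) = ⌈(L : ℝ) * q⌉ then 1 else 0)
          + (1 / (L : ℝ)) * ∑ s ∈ Finset.range t,
              Γ s r false b (((l : ℝ) - 1) / L) q *
                (Γ t (s : ℤ) true false ((l : ℝ) / L) ((l : ℝ) / L)
                  - C (t : ℤ) (s : ℤ) true ((l : ℝ) / L))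
  bwd_C : ∀ t : ℕ, t < T → ∀ s : ℕ, s ≤ t → ∀ l : ℕ, 1 ≤ l → l ≤ L →
    ∀ p : ℝ, ((l : ℝ) - 1) / L < p → p ≤ (l : ℝ) / L →
      C (t : ℤ) (s : ℤ) true p =
        ∑ t' ∈ Finset.Icc (-1 : ℤ) (t : ℤ), ∑ s' ∈ Finset.Icc (-1 : ℤ) (s : ℤ), ∑ b : Bool,
          ∫ q in Ioc (0 : ℝ) 1,
            Γ t t' true b ((l : ℝ) / L) q * C t' s' b q * Γ s s' true b ((l : ℝ) / L) q

/-!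
Sampled at the grid points of mesh `1 / L`, the coefficients and covariances become `L × L`
matrices, viewed as step functions on the unit square. The right mode of convergence is uniform
boundedness together with *continuous* convergence (the evaluation point may move with `L`) off the
diagonal, where `Γ_{t,t,a,a}` has a jump. Since the diagonal is a null set in every section,
dominated convergence shows that composing two such kernels gives convergence at all points.

Given all sweeps of the steps `s < t`, one sweep of step `t` is linear: the innovations
`Γ_{t,s,a,1-a} - C_{t,s,a}` and the covariances `C_{t,s,a}`, `s < t`, together solve a Volterra
system whose kernels and forcing term involve earlier steps only, once `Γ_{t,t'}` has been
eliminated from the formula for `C_{t,s}`. In an exponentially weighted norm the Volterra operator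
is a contraction uniformly in `L`, so the Picard iterates, which converge as `L → ∞`, approximate
the solution uniformly in `L`. The only nonlinearity is the continuous map `ℓ'_t`, applied to the
scalar output between the forward and the backward sweep, and strong induction on `t` concludes.
-/

open scoped unitInterval BigOperators

/-! ### Grid cells of the unit interval -/

/-- The index `l` of the cell `(l / L, (l + 1) / L]` of the uniform grid of mesh `1 / L` that
contains `x`. Truncated subtraction puts `x = 0` into the cell with index `0`. -/
noncomputable def cell (L : ℕ) (x : ℝ) : ℕ := ⌈(L : ℝ) * x⌉₊ - 1

lemma cell_lt {L : ℕ} (hL : 0 < L) {x : ℝ} (hx : x ≤ 1) : cell L x < L := by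
  have : ⌈(L : ℝ) * x⌉₊ ≤ L := Nat.ceil_le.2 (mul_le_of_le_one_right L.cast_nonneg hx)
  unfold cell
  lia

lemma mem_Ioc_cell {L : ℕ} (hL : 0 < L) {x : ℝ} (hx : 0 < x) :
    x ∈ Set.Ioc ((cell L x : ℝ) / L) ((cell L x + 1) / L) := by
  have hL' : (0 : ℝ) < L := Nat.cast_pos.2 hL
  have hceil : (cell L x : ℝ) + 1 = ⌈(L : ℝ) * x⌉₊ := by
    have : 0 < ⌈(L : ℝ) * x⌉₊ := Nat.ceil_pos.2 (mul_pos hL' hx)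
    unfold cell
    exact_mod_cast Nat.sub_add_cancel this
  rw [Set.mem_Ioc, div_lt_iff₀ hL', le_div_iff₀ hL', mul_comm x, hceil]
  exact ⟨by linarith [Nat.ceil_lt_add_one (mul_pos hL' hx).le], Nat.le_ceil _⟩

lemma cell_eq_of_mem_Ioc {L m : ℕ} (hL : 0 < L) {x : ℝ}
    (hx : x ∈ Set.Ioc ((m : ℝ) / L) ((m + 1) / L)) : cell L x = m := by
  have hL' : (0 : ℝ) < L := Nat.cast_pos.2 hL
  rw [Set.mem_Ioc, div_lt_iff₀ hL', le_div_iff₀ hL', mul_comm x] at hx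
  have : ⌈(L : ℝ) * x⌉₊ = m + 1 := (Nat.ceil_eq_iff m.succ_ne_zero).2 <| by simpa using hx
  simp [cell, this]

lemma succ_div_mem_Ioc {L : ℕ} (hL : 0 < L) (m : ℕ) :
    ((m : ℝ) + 1) / L ∈ Set.Ioc ((m : ℝ) / L) ((m + 1) / L) :=
  ⟨by gcongr; exact lt_add_one _, le_rfl⟩

lemma cell_succ_div {L : ℕ} (hL : 0 < L) (m : ℕ) : cell L (((m : ℝ) + 1) / L) = m :=
  cell_eq_of_mem_Ioc hL (succ_div_mem_Ioc hL m)

lemma succ_div_mem_Ioc_zero_one {L m : ℕ} (hm : m < L) : ((m : ℝ) + 1) / L ∈ Set.Ioc (0 : ℝ) 1 := by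
  have hL : (0 : ℝ) < L := Nat.cast_pos.2 (Nat.zero_lt_of_lt hm)
  exact ⟨by positivity, (div_le_one hL).2 (by exact_mod_cast hm)⟩

lemma cell_one (L : ℕ) : cell L 1 = L - 1 := by simp [cell]

lemma natCast_eq_ceil_iff {L l : ℕ} (hL : 0 < L) {x : ℝ} (hx : 0 < x) :
    ((l + 1 : ℕ) : ℤ) = ⌈(L : ℝ) * x⌉ ↔ l = cell L x := by
  have hpos : 0 < (L : ℝ) * x := mul_pos (Nat.cast_pos.2 hL) hx
  have : 0 < ⌈(L : ℝ) * x⌉₊ := Nat.ceil_pos.2 hpos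
  rw [← Int.natCast_ceil_eq_ceil hpos.le]
  unfold cell
  lia

lemma abs_cell_div_sub_le {L : ℕ} (hL : 0 < L) {x : ℝ} (hx : 0 ≤ x) :
    |(cell L x : ℝ) / L - x| ≤ 1 / L := by
  rcases hx.eq_or_lt with rfl | hx
  · simp [cell]
  · obtain ⟨h₁, h₂⟩ := mem_Ioc_cell hL hx
    rw [add_div] at h₂
    rw [abs_le]
    constructor <;> linarith [show (0 : ℝ) ≤ 1 / L by positivity]

lemma tendsto_cell_div (x : I) :
    Tendsto (fun q : ℕ × I => (cell q.1 q.2 : ℝ) / q.1) (atTop ×ˢ 𝓝 x) (𝓝 (x : ℝ)) := by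
  have hmesh : Tendsto (fun q : ℕ × I => 1 / (q.1 : ℝ)) (atTop ×ˢ 𝓝 x) (𝓝 0) :=
    tendsto_one_div_atTop_nhds_zero_nat.comp tendsto_fst
  have hdiff : Tendsto (fun q : ℕ × I => (cell q.1 q.2 : ℝ) / q.1 - q.2) (atTop ×ˢ 𝓝 x) (𝓝 0) := by
    refine squeeze_zero_norm' ?_ hmesh
    filter_upwards [tendsto_fst.eventually (eventually_gt_atTop 0)] with q hq
    exact abs_cell_div_sub_le hq q.2.2.1
  simpa using hdiff.add ((continuous_subtype_val.tendsto x).comp tendsto_snd)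

lemma eventually_cell_lt_cell {x y : I} (h : x < y) :
    ∀ᶠ q : ℕ × I × I in atTop ×ˢ 𝓝 (x, y), cell q.1 q.2.1 < cell q.1 q.2.2 := by
  rw [nhds_prod_eq]
  have hx := (tendsto_cell_div x).comp
    (tendsto_fst.prodMk (tendsto_fst.comp tendsto_snd) :
      Tendsto (fun q : ℕ × I × I => (q.1, q.2.1)) (atTop ×ˢ 𝓝 x ×ˢ 𝓝 y) _)
  have hy := (tendsto_cell_div y).comp
    (tendsto_fst.prodMk (tendsto_snd.comp tendsto_snd) :
      Tendsto (fun q : ℕ × I × I => (q.1, q.2.2)) (atTop ×ˢ 𝓝 x ×ˢ 𝓝 y) _)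
  filter_upwards [hx.eventually_lt hy h] with q hq
  by_contra! hle
  exact hq.not_ge (by dsimp only [Function.comp]; gcongr)

lemma measurable_cell (L : ℕ) : Measurable (cell L) :=
  (measurable_of_countable fun n : ℕ => n - 1).comp (Nat.measurable_ceil.comp (by fun_prop))

lemma expect_range_eq_div (L : ℕ) (v : ℕ → ℝ) :
    𝔼 m ∈ range L, v m = (∑ m ∈ range L, v m) / L := by
  rw [expect_eq_sum_div_card, card_range]

lemma setIntegral_comp_cell {L : ℕ} (hL : 0 < L) (v : ℕ → ℝ) :
    ∫ x in Set.Ioc (0 : ℝ) 1, v (cell L x) = 𝔼 m ∈ range L, v m := by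
  have hL' : (L : ℝ) ≠ 0 := Nat.cast_ne_zero.2 hL.ne'
  have hle (m : ℕ) : (m : ℝ) / L ≤ ((m + 1 : ℕ) : ℝ) / L := by gcongr; exact m.le_succ
  have hconst (m : ℕ) : EqOn (fun x => v (cell L x)) (fun _ => v m)
      (Set.Ioc ((m : ℝ) / L) (((m + 1 : ℕ) : ℝ) / L)) := fun x hx => by
    simp only [cell_eq_of_mem_Ioc hL (by exact_mod_cast hx)]
  have hint (m : ℕ) : ∫ x in (m : ℝ) / L..((m + 1 : ℕ) : ℝ) / L, v (cell L x) = v m / L := by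
    rw [intervalIntegral.integral_congr_Ioo_of_le (hle m) ((hconst m).mono Ioo_subset_Ioc_self),
      intervalIntegral.integral_const, smul_eq_mul]
    push_cast
    ring
  have hsum := intervalIntegral.sum_integral_adjacent_intervals (n := L) (μ := volume)
    (f := fun x => v (cell L x)) (a := fun m : ℕ => (m : ℝ) / L) fun m _ =>
      (intervalIntegrable_iff_integrableOn_Ioc_of_le (hle m)).2 <|
        (integrableOn_congr_fun (hconst m) measurableSet_Ioc).2 (integrableOn_const (by simp))
  rw [← intervalIntegral.integral_of_le zero_le_one, expect_range_eq_div, sum_div]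
  simpa only [hint, Nat.cast_zero, zero_div, div_self hL'] using hsum.symm

lemma integral_unitInterval_comp_cell {L : ℕ} (hL : 0 < L) (v : ℕ → ℝ) :
    ∫ x : I, v (cell L x) = 𝔼 m ∈ range L, v m := by
  rw [← setIntegral_comp_cell hL, ← integral_Icc_eq_integral_Ioc]
  exact integral_subtype_comap measurableSet_Icc fun x => v (cell L x)

/-! ### Convergent kernels on refining grids -/

/-- A family of matrices, one of size `L × L` for each mesh `1 / L`; only the entries
`K L l m` with `l, m < L` matter. Arrays with a single index, and numbers depending on `L`
only, are treated as kernels that ignore the remaining arguments. -/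
abbrev GridKernel := ℕ → ℕ → ℕ → ℝ

namespace GridKernel

/-- The step functions on the unit square determined by a grid kernel, jointly in the mesh and
the two positions. -/
noncomputable def stepFun (K : GridKernel) (q : ℕ × I × I) : ℝ :=
  K q.1 (cell q.1 q.2.1) (cell q.1 q.2.2)

/-- Uniform boundedness together with continuous convergence (the positions may move with `L`) of
the step functions of a grid kernel at every point of `S`. -/
structure ConvergesOn (S : Set (I × I)) (K : GridKernel) : Prop where
  bounded : ∃ B, ∀ᶠ L in atTop, ∀ l < L, ∀ m < L, |K L l m| ≤ B
  convergesAt : ∀ p ∈ S, ∃ v, Tendsto K.stepFun (atTop ×ˢ 𝓝 p) (𝓝 v)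

/-- The composition of two grid kernels viewed as integral operators. -/
noncomputable def comp (K K' : GridKernel) : GridKernel :=
  fun L l m => 𝔼 j ∈ range L, K L l j * K' L j m

variable {S S' : Set (I × I)} {K K' : GridKernel}

lemma eventually_cells_lt (p : I × I) :
    ∀ᶠ q : ℕ × I × I in atTop ×ˢ 𝓝 p, cell q.1 q.2.1 < q.1 ∧ cell q.1 q.2.2 < q.1 := by
  filter_upwards [tendsto_fst.eventually (eventually_gt_atTop 0)] with q hq
  exact ⟨cell_lt hq q.2.1.2.2, cell_lt hq q.2.2.2.2⟩

lemma eventually_abs_stepFun_le {B : ℝ} (hB : ∀ᶠ L in atTop, ∀ l < L, ∀ m < L, |K L l m| ≤ B)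
    (p : I × I) : ∀ᶠ q in atTop ×ˢ 𝓝 p, |K.stepFun q| ≤ B := by
  filter_upwards [tendsto_fst.eventually hB, eventually_cells_lt p] with q hq hlt
  exact hq _ hlt.1 _ hlt.2

lemma measurable_stepFun_left (K : GridKernel) (L : ℕ) (x : I) :
    Measurable fun z => K.stepFun (L, x, z) :=
  (measurable_of_countable (K L (cell L x))).comp ((measurable_cell L).comp measurable_subtype_coe)

lemma measurable_stepFun_right (K : GridKernel) (L : ℕ) (y : I) :
    Measurable fun z => K.stepFun (L, z, y) :=
  (measurable_of_countable fun m => K L m (cell L y)).comp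
    ((measurable_cell L).comp measurable_subtype_coe)

namespace ConvergesOn

lemma mono (hK : ConvergesOn S K) (h : S' ⊆ S) : ConvergesOn S' K :=
  ⟨hK.bounded, fun p hp => hK.convergesAt p (h hp)⟩

lemma congr (hK : ConvergesOn S K) (h : ∀ L, ∀ l < L, ∀ m < L, K' L l m = K L l m) :
    ConvergesOn S K' := by
  refine ⟨?_, fun p hp => ?_⟩
  · obtain ⟨B, hB⟩ := hK.bounded
    refine ⟨B, hB.mono fun L hL l hl m hm => ?_⟩
    rw [h L l hl m hm]
    exact hL l hl m hm
  · obtain ⟨v, hv⟩ := hK.convergesAt p hp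
    refine ⟨v, hv.congr' ?_⟩
    filter_upwards [eventually_cells_lt p] with q hq
    exact (h _ _ hq.1 _ hq.2).symm

lemma of_tendsto {z : ℕ → ℝ} {v : ℝ} (hz : Tendsto z atTop (𝓝 v)) :
    ConvergesOn S fun L _ _ => z L := by
  refine ⟨⟨|v| + 1, ?_⟩, fun p _ => ⟨v, hz.comp tendsto_fst⟩⟩
  filter_upwards [hz.abs.eventually_le_const (lt_add_one |v|)] with L hL l _ m _
  exact hL

lemma const (v : ℝ) : ConvergesOn S fun _ _ _ => v := of_tendsto tendsto_const_nhds

lemma add (hK : ConvergesOn S K) (hK' : ConvergesOn S K') :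
    ConvergesOn S fun L l m => K L l m + K' L l m := by
  refine ⟨?_, fun p hp => ?_⟩
  · obtain ⟨⟨B, hB⟩, B', hB'⟩ := hK.bounded, hK'.bounded
    refine ⟨B + B', ?_⟩
    filter_upwards [hB, hB'] with L h h' l hl m hm
    exact (abs_add_le _ _).trans (add_le_add (h l hl m hm) (h' l hl m hm))
  · obtain ⟨⟨v, hv⟩, v', hv'⟩ := hK.convergesAt p hp, hK'.convergesAt p hp
    exact ⟨v + v', hv.add hv'⟩

lemma mul (hK : ConvergesOn S K) (hK' : ConvergesOn S K') :
    ConvergesOn S fun L l m => K L l m * K' L l m := by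
  refine ⟨?_, fun p hp => ?_⟩
  · obtain ⟨⟨B, hB⟩, B', hB'⟩ := hK.bounded, hK'.bounded
    refine ⟨B * B', ?_⟩
    filter_upwards [hB, hB'] with L h h' l hl m hm
    rw [abs_mul]
    exact mul_le_mul (h l hl m hm) (h' l hl m hm) (abs_nonneg _)
      ((abs_nonneg _).trans (h l hl m hm))
  · obtain ⟨⟨v, hv⟩, v', hv'⟩ := hK.convergesAt p hp, hK'.convergesAt p hp
    exact ⟨v * v', hv.mul hv'⟩

lemma neg (hK : ConvergesOn S K) : ConvergesOn S fun L l m => -K L l m := by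
  simpa only [neg_one_mul] using (const (-1)).mul hK

lemma sub (hK : ConvergesOn S K) (hK' : ConvergesOn S K') :
    ConvergesOn S fun L l m => K L l m - K' L l m := by
  simpa only [sub_eq_add_neg] using hK.add hK'.neg

lemma sum {α : Type*} {s : Finset α} {K : α → GridKernel} (hK : ∀ i ∈ s, ConvergesOn S (K i)) :
    ConvergesOn S fun L l m => ∑ i ∈ s, K i L l m := by
  classical
  induction s using Finset.induction_on with
  | empty => simpa only [sum_empty] using const 0
  | insert i s hi ih =>
    simp only [sum_insert hi]
    exact (hK i (mem_insert_self i s)).add (ih fun k hk => hK k (mem_insert_of_mem hk))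

lemma swap (hK : ConvergesOn S K) : ConvergesOn (Prod.swap ⁻¹' S) fun L l m => K L m l := by
  refine ⟨?_, fun p hp => ?_⟩
  · obtain ⟨B, hB⟩ := hK.bounded
    exact ⟨B, hB.mono fun L h l hl m hm => h m hm l hl⟩
  · obtain ⟨v, hv⟩ := hK.convergesAt _ hp
    exact ⟨v, hv.comp (tendsto_fst.prodMk ((continuous_swap.tendsto p).comp tendsto_snd))⟩

lemma swap_compl_diagonal (hK : ConvergesOn (diagonal I)ᶜ K) :
    ConvergesOn (diagonal I)ᶜ fun L l m => K L m l :=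
  hK.swap.mono fun _ hp h => hp h.symm

lemma tendsto_last (hK : ConvergesOn univ K) :
    ∃ v, Tendsto (fun L => K L (L - 1) (L - 1)) atTop (𝓝 v) := by
  obtain ⟨v, hv⟩ := hK.convergesAt (1, 1) (mem_univ _)
  refine ⟨v, (hv.comp (tendsto_id.prodMk tendsto_const_nhds)).congr fun L => ?_⟩
  simp [stepFun, cell_one]

lemma of_approx {Y : ℕ → GridKernel} (hY : ∀ n, ConvergesOn S (Y n)) {ε : ℕ → ℝ}
    (hε : Tendsto ε atTop (𝓝 0))
    (h : ∀ᶠ L in atTop, ∀ n, ∀ l < L, ∀ m < L, |K L l m - Y n L l m| ≤ ε n) :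
    ConvergesOn S K := by
  refine ⟨?_, fun p hp => ?_⟩
  · obtain ⟨B, hB⟩ := (hY 0).bounded
    refine ⟨ε 0 + B, ?_⟩
    filter_upwards [hB, h] with L hL h l hl m hm
    have := (abs_add_le _ _).trans (add_le_add (h 0 l hl m hm) (hL l hl m hm))
    rwa [sub_add_cancel] at this
  · rw [← cauchy_map_iff_exists_tendsto, Metric.cauchy_iff]
    refine ⟨inferInstance, fun δ hδ => ?_⟩
    obtain ⟨n, hn⟩ := (hε.eventually_lt_const (by positivity : 0 < δ / 4)).exists
    obtain ⟨v, hv⟩ := (hY n).convergesAt p hp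
    refine ⟨Metric.ball v (δ / 2), ?_, fun x hx y hy => ?_⟩
    · have happrox : ∀ᶠ q in atTop ×ˢ 𝓝 p, |K.stepFun q - (Y n).stepFun q| ≤ ε n :=
        eventually_abs_stepFun_le (K := fun L l m => K L l m - Y n L l m)
          (h.mono fun L h => h n) p
      rw [Filter.mem_map]
      filter_upwards [happrox, hv (Metric.ball_mem_nhds v (by positivity : 0 < δ / 4))]
        with q hq hYq
      rw [← Real.dist_eq] at hq
      rw [Set.mem_preimage, Metric.mem_ball] at hYq ⊢
      linarith [dist_triangle (K.stepFun q) ((Y n).stepFun q) v]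
    · linarith [dist_triangle_right x y v, Metric.mem_ball.1 hx, Metric.mem_ball.1 hy]

end ConvergesOn

lemma stepFun_comp_eq_integral {q : ℕ × I × I} (hq : 0 < q.1) :
    (K.comp K').stepFun q = ∫ z, K.stepFun (q.1, q.2.1, z) * K'.stepFun (q.1, z, q.2.2) :=
  (integral_unitInterval_comp_cell hq fun j =>
    K q.1 (cell q.1 q.2.1) j * K' q.1 j (cell q.1 q.2.2)).symm

lemma ae_notMem_pair (x y : I) : ∀ᵐ z : I, z ∉ ({x, y} : Set I) :=
  ((countable_singleton y).insert x).ae_notMem volume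

-- The integrand converges at every `z` other than the two coordinates of `p`.
lemma tendsto_stepFun_comp (hK : ConvergesOn (diagonal I)ᶜ K) (hK' : ConvergesOn (diagonal I)ᶜ K')
    (p : I × I) : ∃ v, Tendsto (K.comp K').stepFun (atTop ×ˢ 𝓝 p) (𝓝 v) := by
  obtain ⟨⟨B, hB⟩, B', hB'⟩ := hK.bounded, hK'.bounded
  have hpoint (z : I) (hz : z ∉ ({p.1, p.2} : Set I)) : ∃ v, Tendsto (fun q : ℕ × I × I =>
      K.stepFun (q.1, q.2.1, z) * K'.stepFun (q.1, z, q.2.2)) (atTop ×ˢ 𝓝 p) (𝓝 v) := by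
    rw [Set.mem_insert_iff, Set.mem_singleton_iff, not_or] at hz
    obtain ⟨v, hv⟩ := hK.convergesAt (p.1, z) fun h => hz.1 h.symm
    obtain ⟨v', hv'⟩ := hK'.convergesAt (z, p.2) hz.2
    have hfst : Continuous fun p : I × I => (p.1, z) := by fun_prop
    have hsnd : Continuous fun p : I × I => (z, p.2) := by fun_prop
    exact ⟨v * v', (hv.comp (tendsto_fst.prodMk ((hfst.tendsto p).comp tendsto_snd))).mul
      (hv'.comp (tendsto_fst.prodMk ((hsnd.tendsto p).comp tendsto_snd)))⟩
  choose! v hv using hpoint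
  refine ⟨∫ z, v z, Tendsto.congr' (f₁ := fun q : ℕ × I × I =>
    ∫ z, K.stepFun (q.1, q.2.1, z) * K'.stepFun (q.1, z, q.2.2)) ?_ ?_⟩
  · filter_upwards [tendsto_fst.eventually (eventually_gt_atTop 0)] with q hq
    exact (stepFun_comp_eq_integral hq).symm
  refine tendsto_integral_filter_of_dominated_convergence (fun _ => B * B') ?_ ?_
    (integrable_const _) ((ae_notMem_pair p.1 p.2).mono hv)
  · exact .of_forall fun q => ((K.measurable_stepFun_left _ _).mul
      (K'.measurable_stepFun_right _ _)).aestronglyMeasurable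
  · filter_upwards [tendsto_fst.eventually hB, tendsto_fst.eventually hB',
      tendsto_fst.eventually (eventually_gt_atTop 0)] with q h h' hq
    refine .of_forall fun z => ?_
    have hx := h _ (cell_lt hq q.2.1.2.2) _ (cell_lt hq z.2.2)
    rw [Real.norm_eq_abs, abs_mul]
    exact mul_le_mul hx (h' _ (cell_lt hq z.2.2) _ (cell_lt hq q.2.2.2.2)) (abs_nonneg _)
      ((abs_nonneg _).trans hx)

lemma ConvergesOn.comp (hK : ConvergesOn (diagonal I)ᶜ K) (hK' : ConvergesOn (diagonal I)ᶜ K') :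
    ConvergesOn S (K.comp K') := by
  refine ⟨?_, fun p _ => tendsto_stepFun_comp hK hK' p⟩
  obtain ⟨⟨B, hB⟩, B', hB'⟩ := hK.bounded, hK'.bounded
  refine ⟨B * B', ?_⟩
  filter_upwards [hB, hB'] with L h h' l hl m hm
  refine (abs_expect_le _ _).trans (expect_le ⟨l, mem_range.2 hl⟩ fun j hj => ?_)
  have hj := mem_range.1 hj
  rw [abs_mul]
  exact mul_le_mul (h l hl j hj) (h' j hj m hm) (abs_nonneg _) ((abs_nonneg _).trans (h l hl j hj))

end GridKernel

/-! ### Linear Volterra equations -/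

namespace GridKernel

/-- The indicator of strictly earlier layers (`false`, for forward sweeps) or of strictly later
layers (`true`, for backward sweeps). -/
def causal : Bool → GridKernel
  | false => fun _ l j => if j < l then 1 else 0
  | true => fun _ l j => if l < j then 1 else 0

lemma causal_nonneg (a : Bool) (L l j : ℕ) : 0 ≤ causal a L l j := by
  cases a <;> dsimp only [causal] <;> split_ifs <;> norm_num

lemma abs_causal_le_one (a : Bool) (L l j : ℕ) : |causal a L l j| ≤ 1 := by
  cases a <;> dsimp only [causal] <;> split_ifs <;> norm_num

lemma causal_mul_self (a : Bool) (L l j : ℕ) :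
    causal a L l j * causal a L l j = causal a L l j := by
  cases a <;> simp [causal]

lemma sum_causal_false_mul {L l : ℕ} (hl : l ≤ L) (v : ℕ → ℝ) :
    ∑ j ∈ range L, causal false L l j * v j = ∑ j ∈ range l, v j := by
  have hfilter : {j ∈ range L | j < l} = range l := by ext; simp; lia
  simp only [causal, ite_mul, one_mul, zero_mul, ← sum_filter, hfilter]

lemma sum_causal_true_mul (L l : ℕ) (v : ℕ → ℝ) :
    ∑ j ∈ range L, causal true L l j * v j = ∑ j ∈ Finset.Ico (l + 1) L, v j := by
  have hfilter : {j ∈ range L | l < j} = Finset.Ico (l + 1) L := by ext; simp; lia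
  simp only [causal, ite_mul, one_mul, zero_mul, ← sum_filter, hfilter]

lemma convergesOn_causal (a : Bool) : ConvergesOn (diagonal I)ᶜ (causal a) := by
  have htrue : ConvergesOn (diagonal I)ᶜ (causal true) := by
    refine ⟨⟨1, .of_forall fun L l _ m _ => abs_causal_le_one _ _ _ _⟩, fun ⟨x, y⟩ hp => ?_⟩
    rcases lt_or_gt_of_ne (show x ≠ y from hp) with hxy | hxy
    · refine ⟨1, tendsto_const_nhds.congr' ?_⟩
      filter_upwards [eventually_cell_lt_cell hxy] with q hq
      simp [stepFun, causal, hq]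
    · refine ⟨0, tendsto_const_nhds.congr' ?_⟩
      have hswap : Tendsto (fun q : ℕ × I × I => (q.1, q.2.swap)) (atTop ×ˢ 𝓝 (x, y))
          (atTop ×ˢ 𝓝 (y, x)) :=
        tendsto_fst.prodMk ((continuous_swap.tendsto (x, y)).comp tendsto_snd)
      filter_upwards [hswap.eventually (eventually_cell_lt_cell hxy)] with q hq
      simpa [stepFun, causal] using hq.le
  cases a
  · exact htrue.swap_compl_diagonal
  · exact htrue

/-- A discrete exponential that grows in the direction of the sweep. In the norm weighted by it,
Volterra operators become contractions for large `μ`. -/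
noncomputable def weight (a : Bool) (μ : ℝ) (L l : ℕ) : ℝ :=
  (1 + μ / L) ^ (if a then L - 1 - l else l)

lemma one_le_weight {μ : ℝ} (hμ : 0 ≤ μ) (a : Bool) (L l : ℕ) : 1 ≤ weight a μ L l :=
  one_le_pow₀ (le_add_of_nonneg_right (by positivity))

lemma weight_le_exp {μ : ℝ} (hμ : 0 ≤ μ) (a : Bool) {L l : ℕ} (hl : l < L) :
    weight a μ L l ≤ Real.exp μ := by
  have hL : (L : ℝ) ≠ 0 := Nat.cast_ne_zero.2 (by lia)
  calc weight a μ L l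
      ≤ (1 + μ / L) ^ L :=
        pow_le_pow_right₀ (le_add_of_nonneg_right (by positivity)) (by split_ifs <;> lia)
    _ ≤ Real.exp (μ / L) ^ L := by
        gcongr
        rw [add_comm]
        exact Real.add_one_le_exp _
    _ = Real.exp μ := by rw [← Real.exp_nat_mul, mul_div_cancel₀ _ hL]

lemma sum_causal_mul_weight (a : Bool) (μ : ℝ) {L l : ℕ} (hl : l < L) :
    ∑ j ∈ range L, causal a L l j * weight a μ L j =
      ∑ j ∈ range (if a then L - 1 - l else l), (1 + μ / L) ^ j := by
  cases a
  · rw [sum_causal_false_mul hl.le]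
    rfl
  · rw [sum_causal_true_mul, range_eq_Ico]
    have := sum_Ico_reflect (fun j => (1 + μ / (L : ℝ)) ^ j) (l + 1) (m := L) (n := L - 1) (by lia)
    simpa [weight, show L - 1 + 1 - L = 0 by lia, show L - 1 + 1 - (l + 1) = L - 1 - l by lia]
      using this

lemma expect_causal_mul_weight_le {μ : ℝ} (hμ : 0 < μ) (a : Bool) {L l : ℕ} (hl : l < L) :
    𝔼 j ∈ range L, causal a L l j * weight a μ L j ≤ weight a μ L l / μ := by
  have hgeom := geom_sum_mul (1 + μ / (L : ℝ)) (if a then L - 1 - l else l)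
  rw [← sum_causal_mul_weight a μ hl, add_sub_cancel_left] at hgeom
  rw [expect_range_eq_div, le_div_iff₀ hμ, div_mul_eq_mul_div, mul_div_assoc, hgeom]
  exact sub_le_self _ zero_le_one

variable {ι : Type*} [Fintype ι] {a : Bool} {K : ι → ι → GridKernel} {g y : ι → GridKernel}

/-- The matrix Volterra operator with kernels `K i k`. -/
noncomputable def volterra (a : Bool) (K : ι → ι → GridKernel) (y : ι → GridKernel) :
    ι → GridKernel :=
  fun i L l m => ∑ k, (causal a * K i k).comp (y k) L l m

lemma volterra_apply (a : Bool) (K : ι → ι → GridKernel) (y : ι → GridKernel) (i : ι)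
    (L l m : ℕ) : volterra a K y i L l m =
      𝔼 j ∈ range L, causal a L l j * ∑ k, K i k L l j * y k L j m := by
  simp only [volterra, comp, ← expect_sum_comm, mul_sum, Pi.mul_apply, mul_assoc]

/-- Picard iterates for the Volterra equation `y = g + volterra a K y`. -/
noncomputable def picard (a : Bool) (K : ι → ι → GridKernel) (g : ι → GridKernel) :
    ℕ → ι → GridKernel
  | 0 => 0
  | n + 1 => g + volterra a K (picard a K g n)

lemma volterra_sub (a : Bool) (K : ι → ι → GridKernel) (y y' : ι → GridKernel) :
    volterra a K (y - y') = volterra a K y - volterra a K y' := by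
  ext i L l m
  simp only [volterra, comp, Pi.sub_apply, mul_sub, expect_sub_distrib, sum_sub_distrib]

lemma convergesOn_volterra {S : Set (I × I)} (hK : ∀ i k, ConvergesOn (diagonal I)ᶜ (K i k))
    (hy : ∀ k, ConvergesOn (diagonal I)ᶜ (y k)) (i : ι) : ConvergesOn S (volterra a K y i) :=
  .sum fun k _ => ((convergesOn_causal a).mul (hK i k)).comp (hy k)

lemma convergesOn_picard (hK : ∀ i k, ConvergesOn (diagonal I)ᶜ (K i k))
    (hg : ∀ i, ConvergesOn univ (g i)) (n : ℕ) (i : ι) : ConvergesOn univ (picard a K g n i) := by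
  induction n generalizing i with
  | zero => exact .const 0
  | succ n ih =>
    exact (hg i).add (convergesOn_volterra hK (fun k => (ih k).mono (subset_univ _)) i)

lemma abs_sum_mul_le {κ : Type*} {s : Finset κ} {u v : κ → ℝ} {C D : ℝ} (hD : 0 ≤ D)
    (hu : ∑ i ∈ s, |u i| ≤ C) (hv : ∀ i ∈ s, |v i| ≤ D) : |∑ i ∈ s, u i * v i| ≤ C * D :=
  calc |∑ i ∈ s, u i * v i|
      ≤ ∑ i ∈ s, |u i| * D := (abs_sum_le_sum_abs _ _).trans <| sum_le_sum fun i hi => by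
        rw [abs_mul]
        exact mul_le_mul_of_nonneg_left (hv i hi) (abs_nonneg _)
    _ ≤ C * D := by
        rw [← sum_mul]
        gcongr

lemma abs_volterra_le {C D : ℝ} {L : ℕ} (hC : 0 < C)
    (hK : ∀ i, ∀ l < L, ∀ j < L, ∑ k, |K i k L l j| ≤ C)
    (hy : ∀ k, ∀ l < L, ∀ m < L, |y k L l m| ≤ D * weight a (2 * C) L l)
    (i : ι) {l m : ℕ} (hl : l < L) (hm : m < L) :
    |volterra a K y i L l m| ≤ D / 2 * weight a (2 * C) L l := by
  set w := weight a (2 * C) L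
  have hD : 0 ≤ D := nonneg_of_mul_nonneg_left ((abs_nonneg _).trans (hy i l hl m hm))
    (zero_lt_one.trans_le (one_le_weight (by positivity) a L l))
  have hterm (j : ℕ) (hj : j ∈ range L) :
      |causal a L l j * ∑ k, K i k L l j * y k L j m| ≤ C * D * (causal a L l j * w j) := by
    rw [Finset.mem_range] at hj
    have hw : 0 ≤ w j := zero_le_one.trans (one_le_weight (by positivity) a L j)
    rw [abs_mul, abs_of_nonneg (causal_nonneg a L l j), mul_left_comm, mul_assoc C]
    exact mul_le_mul_of_nonneg_left (abs_sum_mul_le (by positivity) (hK i l hl j hj)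
      fun k _ => hy k j hj m hm) (causal_nonneg a L l j)
  calc |volterra a K y i L l m|
      ≤ 𝔼 j ∈ range L, C * D * (causal a L l j * w j) := by
        rw [volterra_apply]
        exact (abs_expect_le _ _).trans (expect_le_expect hterm)
    _ ≤ C * D * (w l / (2 * C)) := by
        rw [← mul_expect]
        gcongr
        exact expect_causal_mul_weight_le (by positivity) a hl
    _ = D / 2 * w l := by field_simp

lemma abs_le_of_eq_add_volterra {B C : ℝ} {L : ℕ} (hC : 0 < C)
    (hK : ∀ i, ∀ l < L, ∀ j < L, ∑ k, |K i k L l j| ≤ C)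
    (hg : ∀ i, ∀ l < L, ∀ m < L, |g i L l m| ≤ B)
    (hy : ∀ i, ∀ l < L, ∀ m < L, y i L l m = g i L l m + volterra a K y i L l m)
    (i : ι) {l m : ℕ} (hl : l < L) (hm : m < L) :
    |y i L l m| ≤ 2 * B * weight a (2 * C) L l := by
  have hw (l : ℕ) : 1 ≤ weight a (2 * C) L l := one_le_weight (by positivity) a L l
  have hpos (l : ℕ) : 0 < weight a (2 * C) L l := zero_lt_one.trans_le (hw l)
  obtain ⟨⟨i₀, l₀, m₀⟩, hmem, hmax⟩ := exists_max_image
    (Finset.univ ×ˢ Finset.range L ×ˢ Finset.range L)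
    (fun p : ι × ℕ × ℕ => |y p.1 L p.2.1 p.2.2| / weight a (2 * C) L p.2.1)
    ⟨(i, l, m), by simp [hl, hm]⟩
  simp only [Finset.mem_product, Finset.mem_univ, Finset.mem_range, true_and, and_imp, Prod.forall]
    at hmem hmax
  set D := |y i₀ L l₀ m₀| / weight a (2 * C) L l₀
  have hyD (k : ι) (l : ℕ) (hl : l < L) (m : ℕ) (hm : m < L) :
      |y k L l m| ≤ D * weight a (2 * C) L l := (div_le_iff₀ (hpos l)).1 (hmax k l m hl hm)
  have hD_le : D ≤ 2 * B := by
    have hB := hg i₀ l₀ hmem.1 m₀ hmem.2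
    have hop := abs_volterra_le hC hK hyD i₀ hmem.1 hmem.2
    have hy₀ : |y i₀ L l₀ m₀| ≤ (B + D / 2) * weight a (2 * C) L l₀ := by
      rw [hy i₀ l₀ hmem.1 m₀ hmem.2, add_mul]
      exact (abs_add_le _ _).trans (add_le_add
        (hB.trans (le_mul_of_one_le_right ((abs_nonneg _).trans hB) (hw l₀))) hop)
    linarith [(div_le_iff₀ (hpos l₀)).2 hy₀]
  exact (hyD i l hl m hm).trans (mul_le_mul_of_nonneg_right hD_le (hpos l).le)

lemma abs_sub_picard_le {B C : ℝ} {L : ℕ} (hC : 0 < C)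
    (hK : ∀ i, ∀ l < L, ∀ j < L, ∑ k, |K i k L l j| ≤ C)
    (hg : ∀ i, ∀ l < L, ∀ m < L, |g i L l m| ≤ B)
    (hy : ∀ i, ∀ l < L, ∀ m < L, y i L l m = g i L l m + volterra a K y i L l m)
    (n : ℕ) (i : ι) {l m : ℕ} (hl : l < L) (hm : m < L) :
    |y i L l m - picard a K g n i L l m| ≤ 2 * B / 2 ^ n * weight a (2 * C) L l := by
  induction n generalizing i l m with
  | zero => simpa [picard] using abs_le_of_eq_add_volterra hC hK hg hy i hl hm
  | succ n ih =>
    have hstep : y i L l m - picard a K g (n + 1) i L l m =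
        volterra a K (y - picard a K g n) i L l m := by
      rw [hy i l hl m hm, volterra_sub]
      simp only [picard, Pi.add_apply, Pi.sub_apply]
      ring
    rw [hstep, pow_succ, ← div_div]
    exact abs_volterra_le hC hK (fun k l hl m hm => ih k hl hm) i hl hm

lemma exists_eventually_abs_le {κ : Type*} [Finite κ] {S : Set (I × I)} {K : κ → GridKernel}
    (hK : ∀ i, ConvergesOn S (K i)) :
    ∃ B > 0, ∀ᶠ L in atTop, ∀ i, ∀ l < L, ∀ m < L, |K i L l m| ≤ B := by
  choose b hb using fun i => (hK i).bounded
  obtain ⟨B, hB⟩ := Finite.exists_le b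
  refine ⟨max B 1, by positivity, (eventually_all.2 hb).mono fun L h i l hl m hm => ?_⟩
  exact (h i l hl m hm).trans ((hB i).trans (le_max_left B 1))

theorem ConvergesOn.of_eq_add_volterra (hK : ∀ i k, ConvergesOn (diagonal I)ᶜ (K i k))
    (hg : ∀ i, ConvergesOn univ (g i))
    (hy : ∀ i L, ∀ l < L, ∀ m < L, y i L l m = g i L l m + volterra a K y i L l m) (i : ι) :
    ConvergesOn univ (y i) := by
  obtain ⟨B, hB, hgB⟩ := exists_eventually_abs_le hg
  obtain ⟨b, hb, hKb⟩ := exists_eventually_abs_le fun p : ι × ι => hK p.1 p.2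
  have : Nonempty ι := ⟨i⟩
  set C : ℝ := Fintype.card ι * b
  have hC : 0 < C := by positivity
  have hε : Tendsto (fun n => 2 * B / 2 ^ n * Real.exp (2 * C)) atTop (𝓝 0) := by
    simpa using ((tendsto_const_nhds.div_atTop
      (tendsto_pow_atTop_atTop_of_one_lt one_lt_two)).mul_const (Real.exp (2 * C)) :
        Tendsto (fun n => 2 * B / 2 ^ n * Real.exp (2 * C)) atTop _)
  refine .of_approx (fun n => convergesOn_picard (a := a) hK hg n i) hε ?_
  filter_upwards [hgB, hKb] with L hgL hKL n l hl m hm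
  have hrow (i : ι) (l : ℕ) (hl : l < L) (j : ℕ) (hj : j < L) : ∑ k, |K i k L l j| ≤ C := by
    simpa [C] using sum_le_card_nsmul univ _ b fun k _ => hKL (i, k) l hl j hj
  refine (abs_sub_picard_le hC hrow hgL (fun i l hl m hm => hy i L l hl m hm) n i hl hm).trans ?_
  gcongr
  exact weight_le_exp (by positivity) a hl

end GridKernel

/-! ### The system of coupled sweeps -/

open GridKernel

/-- The innovation `Γ_{t,s,a,1-a}(l, l) - C_{t,s,a}(l)` through which the sweep of step `t` in
direction `a` couples to the opposite sweep of step `s`. -/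
def innovation (G : Bool → ℕ → ℤ → Bool → GridKernel) (c : ℤ → ℤ → Bool → ℕ → ℕ → ℝ)
    (a : Bool) (t s : ℕ) (L l : ℕ) : ℝ :=
  G a t s (!a) L l l - c t s a L l

/-- The recursion after restriction to grid points. The forward (`a = false`) and the backward
(`a = true`) sweep of step `t` have the coefficients `G a t r b`, the covariances `c t s a` and
the initial value `z a t`, which is `ξ t` for the forward sweep and the image under `φ t` of the
network output for the backward sweep. -/
structure IsSweepSystem (T : ℕ) (ξ : ℕ → ℝ) (φ : ℕ → ℝ → ℝ) (G : Bool → ℕ → ℤ → Bool → GridKernel)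
    (c : ℤ → ℤ → Bool → ℕ → ℕ → ℝ) (z : Bool → ℕ → ℕ → ℝ) : Prop where
  cov_comm : ∀ (t s : ℤ) (a : Bool) (L l : ℕ), l < L → c t s a L l = c s t a L l
  cov_neg_one_neg_one : ∀ (a : Bool) (L l : ℕ), l < L → c (-1) (-1) a L l = 1
  cov_neg_one : ∀ (t : ℕ) (a : Bool) (L l : ℕ), l < L → c t (-1) a L l = 0
  coeff_of_lt : ∀ (t : ℕ) (r : ℤ), t < r → ∀ (a b : Bool) (L l m : ℕ), l < L → G a t r b L l m = 0
  coeff_eq : ∀ (a : Bool), ∀ t < T, ∀ r : ℤ, -1 ≤ r → r ≤ t → ∀ (b : Bool) (L : ℕ),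
    ∀ l < L, ∀ m < L, G a t r b L l m =
      (if r = -1 ∧ b = a then z a t L else 0) + (if t = r ∧ b = a then causal a L l m else 0) +
        𝔼 j ∈ range L, causal a L l j *
          ∑ s ∈ range t, G (!a) s r b L j m * innovation G c a t s L j
  cov_eq : ∀ (a : Bool), ∀ t < T, ∀ s ≤ t, ∀ (L : ℕ), ∀ l < L, c t s a L l =
    ∑ t' ∈ Finset.Icc (-1 : ℤ) t, ∑ s' ∈ Finset.Icc (-1 : ℤ) s, ∑ b,
      𝔼 m ∈ range L, G a t t' b L l m * c t' s' b L m * G a s s' b L l m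
  input_false : ∀ t < T, ∀ L, 0 < L → z false t L = ξ t
  input_true : ∀ t < T, ∀ L, 0 < L → z true t L = φ t (𝔼 j ∈ range L,
    ∑ s ∈ range t, G true s (-1) true L j (L - 1) * innovation G c false t s L j)

/-- Convergence, as the mesh tends to zero, of everything computed by the sweep of step `t` in
direction `a`, apart from the coefficient `G a t t`, which jumps on the diagonal. -/
structure SweepConverges (G : Bool → ℕ → ℤ → Bool → GridKernel)
    (c : ℤ → ℤ → Bool → ℕ → ℕ → ℝ) (a : Bool) (t : ℕ) : Prop where
  coeff : ∀ r : ℤ, -1 ≤ r → r < t → ∀ b, ConvergesOn univ (G a t r b)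
  cov : ∀ s ≤ t, ConvergesOn univ fun L l _ => c t s a L l

lemma sum_Icc_neg_one_eq_sum_range {s t : ℕ} (hst : s < t) {f : ℤ → ℝ} (hneg : f (-1) = 0)
    (hf : ∀ k : ℤ, s < k → f k = 0) : ∑ k ∈ Finset.Icc (-1 : ℤ) s, f k = ∑ k ∈ range t, f k := by
  have hsub : Finset.Icc (-1 : ℤ) s ⊆ Finset.Ico (-1) t := fun k => by
    simp only [Finset.mem_Icc, Finset.mem_Ico]; lia
  rw [sum_subset hsub fun k _ hk => ?_]
  · refine (sum_of_injOn (fun k : ℕ => (k : ℤ)) Nat.cast_injective.injOn (fun k hk => ?_)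
      (fun k hk hk' => ?_) fun _ _ => rfl).symm
    · simp at hk ⊢
      lia
    · obtain rfl | hk0 : k = -1 ∨ 0 ≤ k := by simp at hk; lia
      · exact hneg
      · refine absurd ⟨k.toNat, ?_⟩ hk'
        simp at hk ⊢
        lia
  · exact hf k (by simp at *; lia)

namespace IsSweepSystem

variable {T : ℕ} {ξ : ℕ → ℝ} {φ : ℕ → ℝ → ℝ} {G : Bool → ℕ → ℤ → Bool → GridKernel}
  {c : ℤ → ℤ → Bool → ℕ → ℕ → ℝ} {z : Bool → ℕ → ℕ → ℝ} {a : Bool} {t : ℕ}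

lemma coeff_self (h : IsSweepSystem T ξ φ G c z) (ht : t < T) (b : Bool) {L l m : ℕ}
    (hl : l < L) (hm : m < L) : G a t t b L l m = if b = a then causal a L l m else 0 := by
  rw [h.coeff_eq a t ht t (by lia) le_rfl b L l hl m hm, expect_eq_zero fun j hj => ?_]
  · simp
  · rw [Finset.mem_range] at hj
    rw [sum_eq_zero fun s hs => ?_, mul_zero]
    rw [h.coeff_of_lt s t (by simpa using hs) _ _ L j m hj, zero_mul]

lemma innovation_eq (h : IsSweepSystem T ξ φ G c z) (ht : t < T) {s : ℕ} (hs : s ≤ t) {L l : ℕ}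
    (hl : l < L) : innovation G c a t s L l =
      𝔼 j ∈ range L, causal a L l j *
        ∑ s' ∈ range t, G (!a) s' s (!a) L j l * innovation G c a t s' L j - c t s a L l := by
  rw [innovation, h.coeff_eq a t ht s (by lia) (by exact_mod_cast hs) _ L l hl l hl]
  simp

lemma expect_coeff_mul (h : IsSweepSystem T ξ φ G c z) (ht : t < T) {r : ℤ} (hr : -1 ≤ r)
    (hrt : r < t) (b : Bool) {L l : ℕ} (hl : l < L) (w : ℕ → ℝ) :
    𝔼 m ∈ range L, G a t r b L l m * w m =
      (if r = -1 ∧ b = a then z a t L * 𝔼 m ∈ range L, w m else 0) +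
        𝔼 j ∈ range L, causal a L l j * ∑ s ∈ range t,
          (𝔼 m ∈ range L, w m * G (!a) s r b L j m) * innovation G c a t s L j := by
  have hcoeff : ∀ m ∈ range L, G a t r b L l m * w m =
      (if r = -1 ∧ b = a then z a t L * w m else 0) + 𝔼 j ∈ range L, causal a L l j *
        ∑ s ∈ range t, w m * G (!a) s r b L j m * innovation G c a t s L j := fun m hm => by
    rw [h.coeff_eq a t ht r hr hrt.le b L l hl m (Finset.mem_range.1 hm),
      if_neg (c := (t : ℤ) = r ∧ b = a) fun hrt' => hrt.ne' hrt'.1, add_zero, add_mul,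
      ite_mul, zero_mul, expect_mul]
    congr! 2
    rw [mul_assoc, sum_mul]
    congr! 2
    ring
  rw [expect_congr rfl hcoeff, expect_add_distrib, expect_comm]
  congr! 1
  · split_ifs <;> simp [mul_expect]
  · congr! 1
    rw [← mul_expect, expect_sum_comm]
    simp only [expect_mul]

section Sweep

variable (G c z a t)

/-- The weight `∑ r, C_{t',r,b}(m) Γ_{s,r,a,b}(l, m)` multiplying `Γ_{t,t',a,b}(l, m)` in the
formula for `C_{t,s,a}(l)`. -/
noncomputable def covWeight (s : ℕ) (t' : ℤ) (b : Bool) : GridKernel :=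
  fun L l m => ∑ r ∈ Finset.Icc (-1 : ℤ) s, c t' r b L m * G a s r b L l m

/-- The kernel through which the innovation of index `s'` enters the covariance of index `s`. -/
noncomputable def feedback (s s' : ℕ) : GridKernel :=
  fun L l j => ∑ t' ∈ Finset.Ico (-1 : ℤ) t, ∑ b,
    (covWeight G c a s t' b).comp (fun L m j => G (!a) s' t' b L j m) L l j

/-- The part of the covariance of index `s` that is driven by the initial value of the sweep. -/
noncomputable def covSource (s : ℕ) : GridKernel :=
  fun L l m => z a t L * (covWeight G c a s (-1) a).comp (fun _ _ _ => 1) L l m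

/-- The unknowns of a sweep: its innovations (left) and its covariances (right). -/
def sweepUnknown : Fin t ⊕ Fin t → GridKernel
  | .inl s => fun L l _ => innovation G c a t s L l
  | .inr s => fun L l _ => c t s a L l

/-- The kernels of the linear Volterra system solved by the unknowns of a sweep. -/
noncomputable def sweepKernel : Fin t ⊕ Fin t → Fin t ⊕ Fin t → GridKernel
  | .inl s, .inl r => fun L l j => G (!a) r s (!a) L j l - feedback G c a t s r L l j
  | .inl s, .inr r => fun L l j => -G a s r a L l j
  | .inr s, .inl r => feedback G c a t s r
  | .inr s, .inr r => G a s r a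

/-- The forcing term of the linear Volterra system solved by the unknowns of a sweep. -/
noncomputable def sweepSource : Fin t ⊕ Fin t → GridKernel
  | .inl s => fun L l m => -covSource G c z a t s L l m
  | .inr s => covSource G c z a t s

end Sweep

lemma cov_eq_sum_covWeight (h : IsSweepSystem T ξ φ G c z) (ht : t < T) {s : ℕ} (hs : s ≤ t)
    {L l : ℕ} (hl : l < L) : c t s a L l = ∑ t' ∈ Finset.Icc (-1 : ℤ) t, ∑ b,
      𝔼 m ∈ range L, G a t t' b L l m * covWeight G c a s t' b L l m := by
  rw [h.cov_eq a t ht s hs L l hl]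
  refine sum_congr rfl fun t' _ => ?_
  rw [sum_comm]
  refine sum_congr rfl fun b _ => ?_
  simp only [covWeight, mul_sum, expect_sum_comm, mul_assoc]

lemma sum_expect_coeff_self_mul_covWeight (h : IsSweepSystem T ξ φ G c z) (ht : t < T) {s : ℕ}
    (hs : s < t) {L l : ℕ} (hl : l < L) :
    ∑ b, 𝔼 m ∈ range L, G a t t b L l m * covWeight G c a s t b L l m =
      𝔼 m ∈ range L, causal a L l m * ∑ s' ∈ range t, G a s s' a L l m * c t s' a L m := by
  have hself (b : Bool) : 𝔼 m ∈ range L, G a t t b L l m * covWeight G c a s t b L l m =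
      if b = a then 𝔼 m ∈ range L, causal a L l m * covWeight G c a s t a L l m else 0 := by
    split_ifs with hb
    · subst hb
      exact expect_congr rfl fun m hm => by
        rw [h.coeff_self ht b hl (by simpa using hm), if_pos rfl]
    · exact expect_eq_zero fun m hm => by
        rw [h.coeff_self ht b hl (by simpa using hm), if_neg hb, zero_mul]
  simp only [hself, sum_ite_eq', Finset.mem_univ, if_true]
  refine expect_congr rfl fun m hm => ?_
  have hsum := sum_Icc_neg_one_eq_sum_range hs (f := fun s' => c t s' a L m * G a s s' a L l m)
    (by simp only [h.cov_neg_one t a L m (by simpa using hm), zero_mul])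
    (fun k hk => by simp only [h.coeff_of_lt s k hk a a L l m hl, mul_zero])
  rw [covWeight, hsum]
  simp only [mul_comm]

lemma sum_expect_coeff_mul_covWeight (h : IsSweepSystem T ξ φ G c z) (ht : t < T) (s : ℕ)
    {L l : ℕ} (hl : l < L) (m : ℕ) : ∑ t' ∈ Finset.Ico (-1 : ℤ) t, ∑ b,
      𝔼 m ∈ range L, G a t t' b L l m * covWeight G c a s t' b L l m =
      covSource G c z a t s L l m + 𝔼 j ∈ range L, causal a L l j *
        ∑ s' ∈ range t, feedback G c a t s s' L l j * innovation G c a t s' L j := by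
  have hterm : ∀ t' ∈ Finset.Ico (-1 : ℤ) t, ∀ b : Bool,
      𝔼 m ∈ range L, G a t t' b L l m * covWeight G c a s t' b L l m = _ := fun t' ht' b =>
    h.expect_coeff_mul ht (Finset.mem_Ico.1 ht').1 (Finset.mem_Ico.1 ht').2 b hl _
  rw [sum_congr rfl fun t' ht' => sum_congr rfl fun b _ => hterm t' ht' b]
  simp only [sum_add_distrib]
  congr 1
  · have hmem : (-1 : ℤ) < t := by lia
    simp [ite_and, covSource, comp, hmem]
  · simp only [← expect_sum_comm, ← mul_sum]
    refine expect_congr rfl fun j _ => ?_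
    simp only [feedback, comp, sum_mul]
    rw [sum_comm (s := range t)]
    exact congrArg _ (sum_congr rfl fun t' _ => sum_comm)

lemma cov_eq_covSource_add (h : IsSweepSystem T ξ φ G c z) (ht : t < T) {s : ℕ} (hs : s < t)
    {L l : ℕ} (hl : l < L) (m : ℕ) : c t s a L l = covSource G c z a t s L l m +
      𝔼 j ∈ range L, causal a L l j *
        (∑ s' ∈ range t, feedback G c a t s s' L l j * innovation G c a t s' L j +
          ∑ s' ∈ range t, G a s s' a L l j * c t s' a L j) := by
  rw [h.cov_eq_sum_covWeight ht hs.le hl, ← sum_Ico_add_eq_sum_Icc (by lia),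
    h.sum_expect_coeff_mul_covWeight ht s hl m, h.sum_expect_coeff_self_mul_covWeight ht hs hl,
    add_assoc, ← expect_add_distrib]
  simp only [mul_add]

lemma sweepUnknown_eq (h : IsSweepSystem T ξ φ G c z) (ht : t < T) (i : Fin t ⊕ Fin t)
    {L l : ℕ} (hl : l < L) (m : ℕ) : sweepUnknown G c a t i L l m =
      sweepSource G c z a t i L l m +
        volterra a (sweepKernel G c a t) (sweepUnknown G c a t) i L l m := by
  rw [volterra_apply]
  obtain s | s := i
  · simp only [sweepUnknown, sweepSource, sweepKernel, Fintype.sum_sum_type]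
    rw [h.innovation_eq ht s.2.le hl, h.cov_eq_covSource_add ht s.2 hl m,
      sub_add_eq_sub_sub_swap, ← expect_sub_distrib, sub_eq_neg_add]
    simp only [Finset.sum_range, sub_mul, neg_mul, sum_sub_distrib, sum_neg_distrib]
    congr! 2
    ring
  · simp only [sweepUnknown, sweepSource, sweepKernel, Fintype.sum_sum_type]
    rw [h.cov_eq_covSource_add ht s.2 hl m]
    simp only [Finset.sum_range]

lemma convergesOn_coeff (h : IsSweepSystem T ξ φ G c z) (ht : t < T) (hc : SweepConverges G c a t)
    {r : ℤ} (hr : -1 ≤ r) (b : Bool) : ConvergesOn (diagonal I)ᶜ (G a t r b) := by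
  rcases lt_trichotomy r t with hrt | rfl | hrt
  · exact (hc.coeff r hr hrt b).mono (subset_univ _)
  · by_cases hb : b = a
    · refine (convergesOn_causal a).congr fun L l hl m hm => ?_
      rw [h.coeff_self ht b hl hm, if_pos hb]
    · refine (ConvergesOn.const 0).congr fun L l hl m hm => ?_
      rw [h.coeff_self ht b hl hm, if_neg hb]
  · exact (ConvergesOn.const 0).congr fun L l hl m _ => h.coeff_of_lt t r hrt a b L l m hl

lemma convergesOn_cov_left (h : IsSweepSystem T ξ φ G c z) {n : ℕ}
    (hc : ∀ s < n, ConvergesOn univ fun L l _ => c t s a L l) {r : ℤ} (hr : -1 ≤ r)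
    (hrn : r < n) {S : Set (I × I)} : ConvergesOn S fun L _ m => c t r a L m := by
  obtain rfl | hr0 := hr.eq_or_lt
  · exact (ConvergesOn.const 0).congr fun L l _ m hm => h.cov_neg_one t a L m hm
  · lift r to ℕ using by lia
    exact (hc r (by exact_mod_cast hrn)).swap.mono (subset_univ _)

lemma convergesOn_cov_of_lt (h : IsSweepSystem T ξ φ G c z)
    (hprev : ∀ s < t, ∀ a, SweepConverges G c a s) {t' s' : ℤ} (ht' : -1 ≤ t') (ht't : t' < t)
    (hs' : -1 ≤ s') (hs't : s' < t) (b : Bool) {S : Set (I × I)} :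
    ConvergesOn S fun L _ m => c t' s' b L m := by
  wlog hle : s' ≤ t' generalizing t' s'
  · exact (this hs' hs't ht' ht't (not_le.1 hle).le).congr
      fun L _ _ m hm => h.cov_comm t' s' b L m hm
  obtain rfl | ht0 := ht'.eq_or_lt
  · obtain rfl := le_antisymm hle hs'
    exact (ConvergesOn.const 1).congr fun L _ _ m hm => h.cov_neg_one_neg_one b L m hm
  · lift t' to ℕ using by lia
    exact h.convergesOn_cov_left (n := t' + 1)
      (fun s hs => (hprev t' (by exact_mod_cast ht't) b).cov s (by lia)) hs' (by lia)

section Step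

variable (h : IsSweepSystem T ξ φ G c z) (ht : t < T)
  (hprev : ∀ s < t, ∀ a, SweepConverges G c a s)
  (hz : ∃ v, Tendsto (z a t) atTop (𝓝 v))
include h ht hprev

lemma convergesOn_coeff_of_lt (a : Bool) {s : ℕ} (hs : s < t) {r : ℤ} (hr : -1 ≤ r) (b : Bool) :
    ConvergesOn (diagonal I)ᶜ (G a s r b) :=
  h.convergesOn_coeff (hs.trans ht) (hprev s hs a) hr b

lemma convergesOn_covWeight {s : ℕ} (hs : s < t) {t' : ℤ} (ht' : -1 ≤ t') (ht't : t' < t)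
    (b : Bool) : ConvergesOn (diagonal I)ᶜ (covWeight G c a s t' b) := by
  refine .sum fun s' hs' => ?_
  rw [Finset.mem_Icc] at hs'
  exact (h.convergesOn_cov_of_lt hprev ht' ht't hs'.1 (by lia) b).mul
    (h.convergesOn_coeff_of_lt ht hprev a hs hs'.1 b)

lemma convergesOn_feedback {s s' : ℕ} (hs : s < t) (hs' : s' < t) {S : Set (I × I)} :
    ConvergesOn S (feedback G c a t s s') := by
  refine .sum fun t' ht' => .sum fun b _ => ?_
  rw [Finset.mem_Ico] at ht'
  exact (h.convergesOn_covWeight ht hprev hs ht'.1 ht'.2 b).comp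
    (h.convergesOn_coeff_of_lt ht hprev _ hs' ht'.1 b).swap_compl_diagonal

lemma convergesOn_sweepKernel (i k : Fin t ⊕ Fin t) :
    ConvergesOn (diagonal I)ᶜ (sweepKernel G c a t i k) := by
  have hcoeff (a b : Bool) (s s' : Fin t) : ConvergesOn (diagonal I)ᶜ (G a s s' b) :=
    h.convergesOn_coeff_of_lt ht hprev a s.2 (by lia) b
  rcases i with s | s <;> rcases k with s' | s'
  · exact (hcoeff (!a) (!a) s' s).swap_compl_diagonal.sub
      (h.convergesOn_feedback ht hprev s.2 s'.2)
  · exact (hcoeff a a s s').neg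
  · exact h.convergesOn_feedback ht hprev s.2 s'.2
  · exact hcoeff a a s s'

include hz

lemma convergesOn_sweepSource (i : Fin t ⊕ Fin t) :
    ConvergesOn univ (sweepSource G c z a t i) := by
  obtain ⟨v, hv⟩ := hz
  have hsource (s : Fin t) : ConvergesOn univ (covSource G c z a t s) :=
    (ConvergesOn.of_tendsto hv).mul
      ((h.convergesOn_covWeight ht hprev s.2 le_rfl (by lia) a).comp (.const 1))
  rcases i with s | s
  · exact (hsource s).neg
  · exact hsource s

lemma convergesOn_sweepUnknown (i : Fin t ⊕ Fin t) :
    ConvergesOn univ (sweepUnknown G c a t i) :=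
  .of_eq_add_volterra (h.convergesOn_sweepKernel ht hprev)
    (h.convergesOn_sweepSource ht hprev hz) (fun i _ _ hl m _ => h.sweepUnknown_eq ht i hl m) i

lemma convergesOn_innovation {s : ℕ} (hs : s < t) :
    ConvergesOn univ fun L l _ => innovation G c a t s L l :=
  h.convergesOn_sweepUnknown ht hprev hz (.inl ⟨s, hs⟩)

lemma convergesOn_sum_coeff_mul_innovation {r : ℤ} (hr : -1 ≤ r) (b : Bool) :
    ConvergesOn (diagonal I)ᶜ
      fun L j m => ∑ s ∈ range t, G (!a) s r b L j m * innovation G c a t s L j := by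
  refine .sum fun s hs => ?_
  rw [Finset.mem_range] at hs
  exact (h.convergesOn_coeff_of_lt ht hprev _ hs hr b).mul
    ((h.convergesOn_innovation ht hprev hz hs).mono (subset_univ _))

lemma convergesOn_coeff_step {r : ℤ} (hr : -1 ≤ r) (hrt : r < t) (b : Bool) :
    ConvergesOn univ (G a t r b) := by
  obtain ⟨v, hv⟩ := hz
  have hinit : ConvergesOn univ fun L _ _ => if r = -1 ∧ b = a then z a t L else 0 := by
    split_ifs
    exacts [.of_tendsto hv, .const 0]
  refine (hinit.add ((convergesOn_causal a).comp
    (h.convergesOn_sum_coeff_mul_innovation ht hprev ⟨v, hv⟩ hr b))).congr fun L l hl m hm => ?_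
  rw [h.coeff_eq a t ht r hr hrt.le b L l hl m hm, if_neg (c := (t : ℤ) = r ∧ b = a) (by lia),
    add_zero]
  rfl

lemma convergesOn_coeff_self_mul_cov {r : ℤ} (hr : -1 ≤ r) (hrt : r < t) (b : Bool) :
    ConvergesOn (diagonal I)ᶜ fun L l m => G a t t b L l m * c t r b L m := by
  by_cases hb : b = a
  · subst hb
    refine ((convergesOn_causal b).mul (h.convergesOn_cov_left
      (fun s hs => h.convergesOn_sweepUnknown ht hprev hz (.inr ⟨s, hs⟩)) hr hrt)).congr
      fun L l hl m hm => ?_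
    rw [h.coeff_self ht b hl hm, if_pos rfl]
  · refine (ConvergesOn.const 0).congr fun L l hl m hm => ?_
    rw [h.coeff_self ht b hl hm, if_neg hb, zero_mul]

lemma convergesOn_coeff_mul_cov_mul_coeff {p : ℤ × ℤ}
    (hp : p ∈ (Finset.Icc (-1 : ℤ) t ×ˢ Finset.Icc (-1 : ℤ) t).erase (t, t)) (b : Bool) :
    ConvergesOn (diagonal I)ᶜ
      fun L l m => G a t p.1 b L l m * c p.1 p.2 b L m * G a t p.2 b L l m := by
  have hcoeff {r : ℤ} (hr : -1 ≤ r) (hrt : r < t) : ConvergesOn (diagonal I)ᶜ (G a t r b) :=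
    (h.convergesOn_coeff_step ht hprev hz hr hrt b).mono (subset_univ _)
  obtain ⟨t', s'⟩ := p
  simp only [Finset.mem_erase, ne_eq, Prod.mk.injEq, Finset.mem_product, Finset.mem_Icc] at hp ⊢
  obtain ⟨hne, ⟨ht', ht't⟩, hs', hs't⟩ := hp
  obtain rfl | ht't := ht't.eq_or_lt
  · exact (h.convergesOn_coeff_self_mul_cov ht hprev hz hs' (by lia) b).mul
      (hcoeff hs' (by lia))
  obtain rfl | hs't := hs't.eq_or_lt
  · refine ((h.convergesOn_coeff_self_mul_cov ht hprev hz ht' ht't b).mul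
      (hcoeff ht' ht't)).congr fun L l _ m hm => ?_
    rw [h.cov_comm t' t b L m hm]
    ring
  · exact ((hcoeff ht' ht't).mul (h.convergesOn_cov_of_lt hprev ht' ht't hs' hs't b)).mul
      (hcoeff hs' hs't)

-- Since `Γ_{t,t,a,a}` is a causal indicator, the top term turns this into a scalar Volterra
-- equation for `C_{t,t,a}`.
omit hz hprev in
lemma cov_self_eq {L l : ℕ} (hl : l < L) : c t t a L l =
    ∑ p ∈ (Finset.Icc (-1 : ℤ) t ×ˢ Finset.Icc (-1 : ℤ) t).erase (t, t), ∑ b,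
      𝔼 m ∈ range L, G a t p.1 b L l m * c p.1 p.2 b L m * G a t p.2 b L l m +
    𝔼 m ∈ range L, causal a L l m * c t t a L m := by
  have hdiag : ∑ b, 𝔼 m ∈ range L, G a t t b L l m * c t t b L m * G a t t b L l m =
      𝔼 m ∈ range L, causal a L l m * c t t a L m := by
    rw [sum_eq_single_of_mem a (Finset.mem_univ a)]
    · refine expect_congr rfl fun m hm => ?_
      rw [h.coeff_self ht a hl (Finset.mem_range.1 hm), if_pos rfl, mul_right_comm,
        causal_mul_self]
    · refine fun b _ hb => expect_eq_zero fun m hm => ?_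
      rw [h.coeff_self ht b hl (Finset.mem_range.1 hm), if_neg hb, mul_zero]
  rw [h.cov_eq a t ht t le_rfl L l hl, ← sum_product', ← hdiag,
    ← sum_erase_add _ _ (show ((t : ℤ), (t : ℤ)) ∈ _ by simp)]

lemma convergesOn_cov_self : ConvergesOn univ fun L l _ => c t t a L l := by
  have hsource := ConvergesOn.sum fun p hp => ConvergesOn.sum (s := Finset.univ) fun b _ =>
    (h.convergesOn_coeff_mul_cov_mul_coeff ht hprev hz hp b).comp (S := univ) (.const 1)
  refine .of_eq_add_volterra (ι := Unit) (a := a) (K := fun _ _ _ _ _ => 1)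
    (y := fun _ L l _ => c t t a L l) (fun _ _ => .const 1) (fun _ => hsource)
    (fun _ L l hl m _ => ?_) ()
  rw [volterra_apply, h.cov_self_eq ht hl]
  simp [GridKernel.comp]

theorem sweepConverges : SweepConverges G c a t where
  coeff _ hr hrt b := h.convergesOn_coeff_step ht hprev hz hr hrt b
  cov s hs := by
    obtain rfl | hs := hs.eq_or_lt
    · exact h.convergesOn_cov_self ht hprev hz
    · exact h.convergesOn_sweepUnknown ht hprev hz (.inr ⟨s, hs⟩)

omit hz

lemma exists_tendsto_output (hz : ∃ v, Tendsto (z false t) atTop (𝓝 v)) :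
    ∃ v, Tendsto (fun L => 𝔼 j ∈ range L, ∑ s ∈ range t,
      G true s (-1) true L j (L - 1) * innovation G c false t s L j) atTop (𝓝 v) := by
  have hout : ConvergesOn univ (GridKernel.comp (fun _ _ _ => 1) fun L j m => ∑ s ∈ range t,
      G (!false) s (-1) true L j m * innovation G c false t s L j) :=
    (ConvergesOn.const 1).comp
      (h.convergesOn_sum_coeff_mul_innovation ht hprev hz le_rfl true)
  simpa only [GridKernel.comp, one_mul, Bool.not_false] using hout.tendsto_last

end Step

theorem sweepConverges_of_continuous (h : IsSweepSystem T ξ φ G c z)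
    (hφ : ∀ t, Continuous (φ t)) {t : ℕ} (ht : t < T) (a : Bool) : SweepConverges G c a t := by
  induction t using Nat.strong_induction_on generalizing a with
  | h t ih =>
    have hprev (s : ℕ) (hs : s < t) (a : Bool) : SweepConverges G c a s := ih s hs (hs.trans ht) a
    have hz_false : ∃ v, Tendsto (z false t) atTop (𝓝 v) := by
      refine ⟨ξ t, tendsto_const_nhds.congr' ?_⟩
      filter_upwards [eventually_gt_atTop 0] with L hL
      exact (h.input_false t ht L hL).symm
    have hz_true : ∃ v, Tendsto (z true t) atTop (𝓝 v) := by
      obtain ⟨v, hv⟩ := h.exists_tendsto_output ht hprev hz_false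
      refine ⟨φ t v, (((hφ t).tendsto v).comp hv).congr' ?_⟩
      filter_upwards [eventually_gt_atTop 0] with L hL
      exact (h.input_true t ht L hL).symm
    cases a
    exacts [h.sweepConverges ht hprev hz_false, h.sweepConverges ht hprev hz_true]

end IsSweepSystem

/-! ### Restriction of the recursion to grid points -/

/-- The position at which the sweep in direction `a` has arrived when it is about to process the
layer with index `l` (counted from `0`). -/
noncomputable def layerPos : Bool → ℕ → ℕ → ℝ
  | false, L, l => (l : ℝ) / L
  | true, L, l => ((l : ℝ) + 1) / L

/-- The change of `Γ_{t,r,a,b}(·, q)` when its sweep passes the layer with index `j`. -/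
noncomputable def increment (Γ : ℕ → ℤ → Bool → Bool → ℝ → ℝ → ℝ) (C : ℤ → ℤ → Bool → ℝ → ℝ)
    (a : Bool) (t : ℕ) (r : ℤ) (b : Bool) (L : ℕ) (q : ℝ) (j : ℕ) : ℝ :=
  (if t = r ∧ b = a ∧ j = cell L q then 1 else 0) +
    (∑ s ∈ range t, Γ s r (!a) b (layerPos (!a) L j) q *
      (Γ t s a (!a) (layerPos a L j) ((j + 1) / L) - C t s a ((j + 1) / L))) / L

lemma sum_causal_mul_increment (Γ : ℕ → ℤ → Bool → Bool → ℝ → ℝ → ℝ) (C : ℤ → ℤ → Bool → ℝ → ℝ)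
    (a : Bool) (t : ℕ) (r : ℤ) (b : Bool) {L : ℕ} (l : ℕ) {q : ℝ} (hq : cell L q < L) :
    ∑ j ∈ range L, causal a L l j * increment Γ C a t r b L q j =
      (if t = r ∧ b = a then causal a L l (cell L q) else 0) +
        𝔼 j ∈ range L, causal a L l j * ∑ s ∈ range t, Γ s r (!a) b (layerPos (!a) L j) q *
          (Γ t s a (!a) (layerPos a L j) ((j + 1) / L) - C t s a ((j + 1) / L)) := by
  simp only [increment, mul_add, sum_add_distrib, ← mul_div_assoc, ← sum_div, expect_range_eq_div]
  congr 1
  by_cases hrb : (t : ℤ) = r ∧ b = a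
  · simp [hrb, hq]
  · simp [← and_assoc, hrb]

lemma natCast_sub_one_add_one_div {L : ℕ} (hL : 0 < L) : (((L - 1 : ℕ) : ℝ) + 1) / L = 1 := by
  rw [← Nat.cast_succ, Nat.succ_eq_add_one, Nat.sub_add_cancel hL,
    div_self (Nat.cast_ne_zero.2 hL.ne')]

namespace IsLinearTP

variable {T L : ℕ} {ξ : ℕ → ℝ} {ℓ' : ℕ → ℝ → ℝ} {Γ : ℕ → ℤ → Bool → Bool → ℝ → ℝ → ℝ}
  {C : ℤ → ℤ → Bool → ℝ → ℝ} {f χ : ℕ → ℝ} {t : ℕ} {r : ℤ}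

section Coeff

variable (h : IsLinearTP T L ξ ℓ' Γ C f χ) (hL : 0 < L) (ht : t < T) (hr : -1 ≤ r)
include h hL ht hr

section ClosedForm

variable (hrt : r ≤ t) (b : Bool) {q : ℝ} (hq : q ∈ Set.Ioc (0 : ℝ) 1)
include hrt hq

lemma forward_succ {l : ℕ} (hl : l < L) : Γ t r false b ((l + 1 : ℕ) / L) q =
    Γ t r false b (l / L) q + increment Γ C false t r b L q l := by
  have hstep := h.fwd_step t ht (l + 1) (by lia) hl r hr hrt b ((l + 1 : ℕ) / L) q
    (by gcongr; simp) le_rfl hq.1 hq.2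
  simp only [natCast_eq_ceil_iff hL hq.1] at hstep
  simp only [Nat.cast_add, Nat.cast_one, add_sub_cancel_right] at hstep ⊢
  rw [hstep, increment]
  simp only [layerPos, Bool.not_false]
  ring

lemma backward_succ {l : ℕ} (hl : l < L) : Γ t r true b (l / L) q =
    Γ t r true b ((l + 1 : ℕ) / L) q + increment Γ C true t r b L q l := by
  have hstep := h.bwd_step t ht (l + 1) (by lia) hl r hr hrt b (l / L) q
    (by gcongr; push_cast; linarith) (by simp) (by positivity) hq.1 hq.2
  simp only [natCast_eq_ceil_iff hL hq.1] at hstep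
  simp only [Nat.cast_add, Nat.cast_one, add_sub_cancel_right] at hstep ⊢
  rw [hstep, increment]
  simp only [layerPos, Bool.not_true]
  ring

lemma forward_eq_sum {l : ℕ} (hl : l ≤ L) : Γ t r false b (l / L) q =
    (if r = -1 ∧ b = false then ξ t else 0) +
      ∑ j ∈ range L, causal false L l j * increment Γ C false t r b L q j := by
  have htele := sum_range_sub (fun j : ℕ => Γ t r false b (j / L) q) l
  rw [Nat.cast_zero, zero_div, h.fwd_init t ht r hr hrt b q hq.1 hq.2] at htele
  rw [sum_causal_false_mul hl, ← sub_eq_iff_eq_add', ← htele]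
  refine sum_congr rfl fun j hj => ?_
  rw [h.forward_succ hL ht hr hrt b hq ((Finset.mem_range.1 hj).trans_le hl), add_sub_cancel_left]

lemma backward_eq_sum {l : ℕ} (hl : l < L) : Γ t r true b ((l + 1 : ℕ) / L) q =
    (if r = -1 ∧ b = true then χ t else 0) +
      ∑ j ∈ range L, causal true L l j * increment Γ C true t r b L q j := by
  have htele := sum_Ico_sub (fun j : ℕ => Γ t r true b (j / L) q) (show l + 1 ≤ L from hl)
  rw [div_self (Nat.cast_ne_zero.2 hL.ne'), h.bwd_init t ht r hr hrt b q hq.1 hq.2] at htele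
  rw [sum_causal_true_mul, ← sub_eq_iff_eq_add', ← neg_inj, ← sum_neg_distrib, neg_sub, ← htele]
  refine sum_congr rfl fun j hj => ?_
  rw [h.backward_succ hL ht hr hrt b hq (Finset.mem_Ico.1 hj).2, sub_add_cancel_left]

lemma coeff_eq (a : Bool) {l : ℕ} (hl : l < L) : Γ t r a b (layerPos a L l) q =
    (if r = -1 ∧ b = a then bif a then χ t else ξ t else 0) +
      (if t = r ∧ b = a then causal a L l (cell L q) else 0) +
        𝔼 j ∈ range L, causal a L l j * ∑ s ∈ range t, Γ s r (!a) b (layerPos (!a) L j) q *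
          (Γ t s a (!a) (layerPos a L j) ((j + 1) / L) - C t s a ((j + 1) / L)) := by
  rw [add_assoc, ← sum_causal_mul_increment Γ C a t r b l (cell_lt hL hq.2)]
  cases a
  · exact h.forward_eq_sum hL ht hr hrt b hq hl.le
  · simpa [layerPos] using h.backward_eq_sum hL ht hr hrt b hq hl

end ClosedForm

omit ht in
lemma coeff_eq_coeff_cell (ht : t < T) (a b : Bool) {l : ℕ} (hl : l < L) {q : ℝ}
    (hq : q ∈ Set.Ioc (0 : ℝ) 1) :
    Γ t r a b (layerPos a L l) q = Γ t r a b (layerPos a L l) ((cell L q + 1) / L) := by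
  induction t using Nat.strong_induction_on generalizing a l with
  | h t ih =>
    obtain hrt | hrt := lt_or_ge (t : ℤ) r
    · rw [h.Γ_vanish t r hrt, h.Γ_vanish t r hrt]
    rw [h.coeff_eq hL ht hr hrt b hq a hl,
      h.coeff_eq hL ht hr hrt b (succ_div_mem_Ioc_zero_one (cell_lt hL hq.2)) a hl,
      cell_succ_div hL]
    congr! 5 with j hj s hs
    rw [Finset.mem_range] at hj hs
    exact ih s hs (hs.trans ht) _ hj

end Coeff

lemma cov_eq_cov_cell_of_le (h : IsLinearTP T L ξ ℓ' Γ C f χ) (hL : 0 < L) (ht : t < T) {s : ℕ}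
    (hs : s ≤ t) (a : Bool) {q : ℝ} (hq : q ∈ Set.Ioc (0 : ℝ) 1) :
    C t s a q = C t s a ((cell L q + 1) / L) := by
  have hcell := cell_lt hL hq.2
  obtain ⟨hlt, hle⟩ := mem_Ioc_cell hL hq.1
  have hlt' := (succ_div_mem_Ioc hL (cell L q)).1
  have hfwd := h.fwd_C t ht s hs (cell L q + 1) (by lia) hcell
  have hbwd := h.bwd_C t ht s hs (cell L q + 1) (by lia) hcell
  push_cast [add_sub_cancel_right] at hfwd hbwd
  cases a
  · rw [hfwd q hlt hle, hfwd _ hlt' le_rfl]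
  · rw [hbwd q hlt hle, hbwd _ hlt' le_rfl]

lemma cov_eq_cov_cell (h : IsLinearTP T L ξ ℓ' Γ C f χ) (hL : 0 < L) {t s : ℤ} (ht : -1 ≤ t)
    (htT : t < T) (hs : -1 ≤ s) (hsT : s < T) (a : Bool) {q : ℝ} (hq : q ∈ Set.Ioc (0 : ℝ) 1) :
    C t s a q = C t s a ((cell L q + 1) / L) := by
  wlog hst : s ≤ t generalizing t s
  · rw [h.C_symm t s, h.C_symm t s, this hs hsT ht htT (not_le.1 hst).le]
  obtain rfl | ht0 := ht.eq_or_lt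
  · obtain rfl := le_antisymm hst hs
    rw [h.C_base, h.C_base]
  obtain rfl | hs0 := hs.eq_or_lt
  · rw [h.C_mixed t (by lia), h.C_mixed t (by lia)]
  · lift t to ℕ using by lia
    lift s to ℕ using by lia
    exact h.cov_eq_cov_cell_of_le hL (by exact_mod_cast htT) (by exact_mod_cast hst) a hq

lemma cov_eq_sum_integral (h : IsLinearTP T L ξ ℓ' Γ C f χ) (ht : t < T) {s : ℕ} (hs : s ≤ t)
    (a : Bool) {l : ℕ} (hl : l < L) : C t s a ((l + 1) / L) =
      ∑ t' ∈ Finset.Icc (-1 : ℤ) t, ∑ s' ∈ Finset.Icc (-1 : ℤ) s, ∑ b, ∫ q in Set.Ioc (0 : ℝ) 1,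
        Γ t t' a b (layerPos a L l) q * C t' s' b q * Γ s s' a b (layerPos a L l) q := by
  have hlt := (succ_div_mem_Ioc (Nat.zero_lt_of_lt hl) l).1
  have hfwd := h.fwd_C t ht s hs (l + 1) (by lia) hl ((l + 1) / L)
  have hbwd := h.bwd_C t ht s hs (l + 1) (by lia) hl ((l + 1) / L)
  push_cast [add_sub_cancel_right] at hfwd hbwd
  cases a
  exacts [hfwd hlt le_rfl, hbwd hlt le_rfl]

lemma cov_eq_sum_expect (h : IsLinearTP T L ξ ℓ' Γ C f χ) (ht : t < T) {s : ℕ} (hs : s ≤ t)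
    (a : Bool) {l : ℕ} (hl : l < L) : C t s a ((l + 1) / L) =
      ∑ t' ∈ Finset.Icc (-1 : ℤ) t, ∑ s' ∈ Finset.Icc (-1 : ℤ) s, ∑ b, 𝔼 m ∈ range L,
        Γ t t' a b (layerPos a L l) ((m + 1) / L) * C t' s' b ((m + 1) / L) *
          Γ s s' a b (layerPos a L l) ((m + 1) / L) := by
  have hL : 0 < L := Nat.zero_lt_of_lt hl
  rw [h.cov_eq_sum_integral ht hs a hl]
  refine sum_congr rfl fun t' ht' => sum_congr rfl fun s' hs' => sum_congr rfl fun b _ => ?_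
  rw [Finset.mem_Icc] at ht' hs'
  rw [← setIntegral_comp_cell hL]
  refine setIntegral_congr_fun measurableSet_Ioc fun q hq => ?_
  rw [h.coeff_eq_coeff_cell hL ht'.1 ht a b hl hq,
    h.coeff_eq_coeff_cell hL hs'.1 (hs.trans_lt ht) a b hl hq,
    h.cov_eq_cov_cell hL ht'.1 (by lia) hs'.1 (by lia) b hq]

lemma output_eq (h : IsLinearTP T L ξ ℓ' Γ C f χ) (hL : 0 < L) (ht : t < T) :
    f t = 𝔼 j ∈ range L, ∑ s ∈ range t,
      Γ s (-1) true true (layerPos true L j) (((L - 1 : ℕ) + 1) / L) *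
        (Γ t s false true (layerPos false L j) ((j + 1) / L) - C t s false ((j + 1) / L)) := by
  have hclosed := h.forward_eq_sum hL ht le_rfl (by lia) true ⟨one_pos, le_rfl⟩ le_rfl
  rw [div_self (Nat.cast_ne_zero.2 hL.ne'), sum_causal_false_mul le_rfl] at hclosed
  rw [h.f_def t ht, hclosed, expect_range_eq_div, sum_div, natCast_sub_one_add_one_div hL]
  simp [increment]

end IsLinearTP

/-- The coefficients `Γ` of all depths `L`, sampled at the grid points of mesh `1 / L`. -/
noncomputable def gridCoeff (Γ : ℕ → ℕ → ℤ → Bool → Bool → ℝ → ℝ → ℝ) (a : Bool) (t : ℕ) (r : ℤ)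
    (b : Bool) : GridKernel :=
  fun L l m => Γ L t r a b (layerPos a L l) ((m + 1) / L)

/-- The covariances `C` of all depths `L`, sampled at the grid points of mesh `1 / L`. -/
noncomputable def gridCov (C : ℕ → ℤ → ℤ → Bool → ℝ → ℝ) (t s : ℤ) (a : Bool) (L l : ℕ) : ℝ :=
  C L t s a ((l + 1) / L)

lemma isSweepSystem_of_isLinearTP {T : ℕ} {ξ : ℕ → ℝ} {ℓ' : ℕ → ℝ → ℝ}
    {Γ : ℕ → ℕ → ℤ → Bool → Bool → ℝ → ℝ → ℝ} {C : ℕ → ℤ → ℤ → Bool → ℝ → ℝ} {f χ : ℕ → ℕ → ℝ}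
    (h : ∀ L : ℕ, 0 < L → IsLinearTP T L ξ ℓ' (Γ L) (C L) (f L) (χ L)) :
    IsSweepSystem T ξ ℓ' (gridCoeff Γ) (gridCov C) fun a t L => bif a then χ L t else ξ t where
  cov_comm t s a L l hl := (h L (Nat.zero_lt_of_lt hl)).C_symm t s a _
  cov_neg_one_neg_one a L l hl := (h L (Nat.zero_lt_of_lt hl)).C_base a _
  cov_neg_one t a L l hl := (h L (Nat.zero_lt_of_lt hl)).C_mixed t (by lia) a _
  coeff_of_lt t r hr a b L l m hl := (h L (Nat.zero_lt_of_lt hl)).Γ_vanish t r hr a b _ _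
  coeff_eq a t ht r hr hrt b L l hl m hm := by
    have hL := Nat.zero_lt_of_lt hl
    have hcoeff := (h L hL).coeff_eq hL ht hr hrt b (succ_div_mem_Ioc_zero_one hm) a hl
    rwa [cell_succ_div hL] at hcoeff
  cov_eq a t ht s hs L l hl := (h L (Nat.zero_lt_of_lt hl)).cov_eq_sum_expect ht hs a hl
  input_false _ _ _ _ := rfl
  input_true t ht L hL := by
    rw [cond_true, (h L hL).χ_def t ht, (h L hL).output_eq hL ht]
    rfl

theorem stmt_16_general
    (T : ℕ) (ξ : ℕ → ℝ) (ℓ : ℕ → ℝ → ℝ) (ℓ' : ℕ → ℝ → ℝ)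
    (hderiv : ∀ (t : ℕ) (x : ℝ), HasDerivAt (ℓ t) (ℓ' t x) x)
    (hcont : ∀ t : ℕ, Continuous (ℓ' t))
    (Γ : ℕ → ℕ → ℤ → Bool → Bool → ℝ → ℝ → ℝ)
    (C : ℕ → ℤ → ℤ → Bool → ℝ → ℝ)
    (f χ : ℕ → ℕ → ℝ)
    (hTP : ∀ L : ℕ, 1 ≤ L → IsLinearTP T L ξ ℓ' (Γ L) (C L) (f L) (χ L)) :
    ∀ t : ℕ, t < T → ∀ s : ℕ, s ≤ t →
      ∃ K : ℝ, Tendsto (fun L : ℕ => C L (t : ℤ) (s : ℤ) true 1) atTop (𝓝 K) := by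
  intro t ht s hs
  have hconv := (isSweepSystem_of_isLinearTP hTP).sweepConverges_of_continuous hcont ht true
  obtain ⟨K, hK⟩ := (hconv.cov s hs).tendsto_last
  refine ⟨K, hK.congr' ?_⟩
  filter_upwards [eventually_gt_atTop 0] with L hL
  rw [gridCov, natCast_sub_one_add_one_div hL]

/-- For every `0 ≤ s ≤ t ≤ T − 1`, the limiting covariance kernel
`K(t,s) = lim_k C^{2^k}_{t,s,1}(1)` of the final-layer features exists. -/
theorem stmt_16
    (T : ℕ) (hT : 1 ≤ T) (ξ : ℕ → ℝ) (ℓ : ℕ → ℝ → ℝ) (ℓ' : ℕ → ℝ → ℝ)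
    (hderiv : ∀ (t : ℕ) (x : ℝ), HasDerivAt (ℓ t) (ℓ' t x) x)
    (hlip : ∀ t : ℕ, LocallyLipschitz (ℓ' t))
    (Γ : ℕ → ℕ → ℤ → Bool → Bool → ℝ → ℝ → ℝ)
    (C : ℕ → ℤ → ℤ → Bool → ℝ → ℝ)
    (f χ : ℕ → ℕ → ℝ)
    (hTP : ∀ L : ℕ, 1 ≤ L → IsLinearTP T L ξ ℓ' (Γ L) (C L) (f L) (χ L)) :
    ∀ t : ℕ, t < T → ∀ s : ℕ, s ≤ t →
      ∃ K : ℝ, Tendsto (fun k : ℕ => C (2 ^ k) (t : ℤ) (s : ℤ) true 1) atTop (𝓝 K) := by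
  intro t ht s hs
  obtain ⟨K, hK⟩ := stmt_16_general T ξ ℓ ℓ' hderiv (fun t => (hlip t).continuous) Γ C f χ hTP
    t ht s hs
  exact ⟨K, hK.comp (tendsto_pow_atTop_atTop_of_one_lt one_lt_two)⟩
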